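/- arXiv:2503.19233 — 4 statements merged into one kernel-verified Lean document; each statement's English description precedes it below -/
import Mathlib

section
/- Cartan's bound for a tableau of derivations with trivial symbol: let T ⊆ Λ^{k+1}(W;V) be a tableau of k-derivations with trivial symbol, let 0 = W_0 ⊂ W_1 ⊂ … ⊂ W_n = W be a full flag of W with Cartan characters s_i = dim T_{W_{i-1}} − dim T_{W_i}, and let T^{(1)} = {ξ ∈ Hom(W,T) : δξ = 0} be the first prolongation. Then dim T^{(1)} ≤ s_1 + 2·s_2 + … + n·s_n. -/
open Module

variable {W : Type*} [AddCommGroup W] [Module ℝ W] [FiniteDimensional ℝ W]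
variable {V : Type*} [AddCommGroup V] [Module ℝ V] [FiniteDimensional ℝ V]

/-- The alternating `m`-linear maps `W^m → V` vanishing whenever all of their arguments lie
in the subspace `U ⊆ W`.  For a tableau `T ⊆ Λ^m(W;V)`, the subspace `T_U` is
`T ⊓ vanishingOn m U`. -/
def vanishingOn (m : ℕ) (U : Submodule ℝ W) :
    Submodule ℝ (AlternatingMap ℝ W V (Fin m)) where
  carrier := {c | ∀ u : Fin m → W, (∀ i, u i ∈ U) → c u = 0}
  zero_mem' := by intro u _; simp
  add_mem' := by intro a b ha hb u hu; simp [ha u hu, hb u hu]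
  smul_mem' := by intro r a ha u hu; simp [ha u hu]

/-- The first prolongation `T^{(1)} = {ξ ∈ Hom(W,T) : δξ = 0}` of a tableau
`T ⊆ Λ^{k+1}(W;V)` of `k`-derivations with trivial symbol, where the Spencer differential is
`(δξ)(w₀,…,w_{k+1}) = ∑ᵢ (-1)^i ξ(wᵢ)(w₀,…,ŵᵢ,…,w_{k+1})`. -/
def prolongation {k : ℕ} (T : Submodule ℝ (AlternatingMap ℝ W V (Fin (k + 1)))) :
    Submodule ℝ (W →ₗ[ℝ] AlternatingMap ℝ W V (Fin (k + 1))) where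
  carrier := {ξ | (∀ w : W, ξ w ∈ T) ∧
    ∀ w : Fin (k + 2) → W,
      ∑ i : Fin (k + 2), ((-1 : ℝ) ^ (i : ℕ)) • ξ (w i) (w ∘ i.succAbove) = 0}
  zero_mem' := by
    refine ⟨fun w => T.zero_mem, fun w => ?_⟩
    simp
  add_mem' := by
    rintro a b ⟨ha1, ha2⟩ ⟨hb1, hb2⟩
    refine ⟨fun w => T.add_mem (ha1 w) (hb1 w), fun w => ?_⟩
    have h := ha2 w
    have h' := hb2 w
    simp only [LinearMap.add_apply, AlternatingMap.add_apply, smul_add,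
      Finset.sum_add_distrib, h, h', add_zero]
  smul_mem' := by
    rintro c ξ ⟨h1, h2⟩
    refine ⟨fun w => T.smul_mem c (h1 w), fun w => ?_⟩
    have h := h2 w
    calc ∑ i : Fin (k + 2), ((-1 : ℝ) ^ (i : ℕ)) • (c • ξ) (w i) (w ∘ i.succAbove)
        = c • ∑ i : Fin (k + 2), ((-1 : ℝ) ^ (i : ℕ)) • ξ (w i) (w ∘ i.succAbove) := by
          rw [Finset.smul_sum]
          refine Finset.sum_congr rfl fun i _ => ?_
          rw [LinearMap.smul_apply, AlternatingMap.smul_apply, smul_comm]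
      _ = 0 := by rw [h, smul_zero]

/-!
For a tableau `T` write `P = T⁽¹⁾`, let `P_U` be the maps of `P` that vanish on `U ⊆ W`, and put
`q(U) = dim P_U + dim U * dim T_U`, so that `q(0) = dim T⁽¹⁾` and `q(W) = 0`.  If `ξ ∈ P` vanishes
on `U`, then evaluating `δξ = 0` at `(w, u₀, …, u_k)` with all `uⱼ ∈ U` leaves only the term
`ξ(w)(u₀, …, u_k)`, so `ξ` takes its values in `T_U`.  For `U ⊆ U'`, restricting the maps of `P_U`
to a complement `C` of `U` in `U'` therefore lands in `Hom(C, T_U)` with kernel `P_{U'}`, whence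
`q(U) ≤ q(U') + dim U' * (dim T_U - dim T_{U'})`; along a filtration these inequalities
telescope.
-/

theorem le_add_sum_of_castSucc_le_succ_add {M : Type*} [AddCommMonoid M] [Preorder M]
    [AddLeftMono M] {n : ℕ} (q : Fin (n + 1) → M) (e : Fin n → M)
    (h : ∀ i, q i.castSucc ≤ q i.succ + e i) : q 0 ≤ q (Fin.last n) + ∑ i, e i := by
  induction n with
  | zero => simp
  | succ n ih =>
    calc q 0 ≤ q (Fin.succ 0) + e 0 := h 0
      _ ≤ q (Fin.last (n + 1)) + ∑ i : Fin n, e i.succ + e 0 := by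
        gcongr
        exact ih (fun i => q i.succ) (fun i => e i.succ) fun i => h i.succ
      _ = q (Fin.last (n + 1)) + ∑ i, e i := by
        rw [Fin.sum_univ_succ, add_assoc, add_comm (e 0)]

section CompatibleMaps

open Submodule

variable {R M N : Type*} [CommSemiring R] [AddCommMonoid M] [Module R M]
  [AddCommMonoid N] [Module R N]

theorem range_compRight_subtype (S : Submodule R N) :
    LinearMap.range (S.subtype.compRight R (M := M)) = compatibleMaps ⊤ S := by
  ext f
  constructor
  · rintro ⟨g, rfl⟩ x -
    exact (g x).2
  · intro maps_into_S
    exact ⟨f.codRestrict S fun x => maps_into_S mem_top, f.subtype_comp_codRestrict S _⟩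

theorem ker_lcomp_subtype (U : Submodule R M) :
    LinearMap.ker (U.subtype.lcomp R N) = U.compatibleMaps ⊥ :=
  Submodule.ext fun _ => LinearMap.ext_iff.trans Subtype.forall

theorem compatibleMaps_sup (U C : Submodule R M) (S : Submodule R N) :
    (U ⊔ C).compatibleMaps S = U.compatibleMaps S ⊓ C.compatibleMaps S :=
  Submodule.ext fun f => sup_le_iff (c := S.comap f)

theorem compatibleMaps_bot_left (S : Submodule R N) :
    (⊥ : Submodule R M).compatibleMaps S = ⊤ :=
  eq_top_iff.2 fun f _ => bot_le (a := S.comap f)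

theorem compatibleMaps_top_bot :
    (⊤ : Submodule R M).compatibleMaps (⊥ : Submodule R N) = ⊥ :=
  eq_bot_iff.2 fun _ hf => LinearMap.ext fun _ => hf mem_top

end CompatibleMaps

theorem finrank_eq_finrank_map_add_finrank_inf_ker {K E F : Type*} [DivisionRing K]
    [AddCommGroup E] [Module K E] [AddCommGroup F] [Module K F] (f : E →ₗ[K] F)
    (P : Submodule K E) [FiniteDimensional K P] :
    finrank K P = finrank K (P.map f) + finrank K ↥(P ⊓ LinearMap.ker f) := by
  rw [← (f.domRestrict P).finrank_range_add_finrank_ker, LinearMap.range_domRestrict,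
    LinearMap.ker_domRestrict, ← Submodule.finrank_map_subtype_eq, Submodule.map_comap_subtype]

section Filtration

open Submodule

variable {K E F : Type*} [Field K] [AddCommGroup E] [Module K E] [FiniteDimensional K E]
  [AddCommGroup F] [Module K F]

instance finiteDimensional_compatibleMaps_top (S : Submodule K F) [FiniteDimensional K S] :
    FiniteDimensional K ((⊤ : Submodule K E).compatibleMaps S) := by
  rw [← range_compRight_subtype]
  infer_instance

theorem finrank_compatibleMaps_top (S : Submodule K F) :
    finrank K ((⊤ : Submodule K E).compatibleMaps S) = finrank K E * finrank K S := by
  have injective_compRight : Function.Injective (S.subtype.compRight K (M := E)) :=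
    fun _ _ h => LinearMap.cancel_left S.injective_subtype |>.1 h
  rw [← range_compRight_subtype, LinearMap.finrank_range_of_inj injective_compRight,
    finrank_linearMap]

theorem finrank_le_finrank_inf_compatibleMaps_bot_add {P : Submodule K (E →ₗ[K] F)}
    (C : Submodule K E) {S : Submodule K F} [FiniteDimensional K S]
    (hP : P ≤ compatibleMaps ⊤ S) :
    finrank K P ≤ finrank K ↥(P ⊓ C.compatibleMaps ⊥) + finrank K C * finrank K S := by
  have : FiniteDimensional K P := finiteDimensional_of_le hP
  have restrict_le : P.map (C.subtype.lcomp K F) ≤ compatibleMaps ⊤ S := by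
    rintro _ ⟨f, hf, rfl⟩ x -
    exact hP hf mem_top
  calc finrank K P
      = finrank K (P.map (C.subtype.lcomp K F)) + finrank K ↥(P ⊓ C.compatibleMaps ⊥) := by
        rw [finrank_eq_finrank_map_add_finrank_inf_ker (C.subtype.lcomp K F), ker_lcomp_subtype]
    _ ≤ finrank K C * finrank K S + finrank K ↥(P ⊓ C.compatibleMaps ⊥) := by
        grw [finrank_mono restrict_le, finrank_compatibleMaps_top]
    _ = _ := add_comm _ _

theorem finrank_inf_compatibleMaps_bot_add_le {P : Submodule K (E →ₗ[K] F)}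
    {U U' : Submodule K E} (hU : U ≤ U') {S : Submodule K F} [FiniteDimensional K S]
    (hP : P ⊓ U.compatibleMaps ⊥ ≤ compatibleMaps ⊤ S) :
    finrank K ↥(P ⊓ U.compatibleMaps ⊥) + finrank K U * finrank K S ≤
      finrank K ↥(P ⊓ U'.compatibleMaps ⊥) + finrank K U' * finrank K S := by
  obtain ⟨C, hdisjoint, rfl⟩ := IsModularLattice.exists_disjoint_and_sup_eq hU
  have finrank_sup : finrank K ↥(U ⊔ C) = finrank K U + finrank K C := by
    rw [← finrank_sup_add_finrank_inf_eq, hdisjoint.eq_bot, finrank_bot, add_zero]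
  rw [finrank_sup, compatibleMaps_sup, ← inf_assoc, add_mul]
  linarith [finrank_le_finrank_inf_compatibleMaps_bot_add C hP]

theorem finrank_le_sum_finrank_mul_finrank_sub {n : ℕ} (P : Submodule K (E →ₗ[K] F))
    (A : Fin (n + 1) → Submodule K E) (S : Fin (n + 1) → Submodule K F)
    [∀ i, FiniteDimensional K (S i)] (hmono : Monotone A) (hbot : A 0 = ⊥)
    (htop : A (Fin.last n) = ⊤) (hS : S (Fin.last n) = ⊥)
    (hP : ∀ i, P ⊓ (A i).compatibleMaps ⊥ ≤ compatibleMaps ⊤ (S i)) :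
    finrank K P ≤ ∑ i : Fin n,
      finrank K (A i.succ) * (finrank K (S i.castSucc) - finrank K (S i.succ)) := by
  let q (i : Fin (n + 1)) : ℕ :=
    finrank K ↥(P ⊓ (A i).compatibleMaps ⊥) + finrank K (A i) * finrank K (S i)
  have q_zero : q 0 = finrank K P := by
    dsimp only [q]
    rw [hbot, compatibleMaps_bot_left, inf_top_eq, finrank_bot, zero_mul, add_zero]
  have q_last : q (Fin.last n) = 0 := by
    dsimp only [q]
    rw [htop, hS, compatibleMaps_top_bot, inf_bot_eq, finrank_bot, finrank_bot, mul_zero,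
      add_zero]
  have q_step (i : Fin n) : q i.castSucc ≤ q i.succ +
      finrank K (A i.succ) * (finrank K (S i.castSucc) - finrank K (S i.succ)) := by
    dsimp only [q]
    grw [finrank_inf_compatibleMaps_bot_add_le (hmono i.castSucc_le_succ) (hP i.castSucc),
      add_assoc, ← mul_add, ← le_add_tsub]
  simpa only [q_zero, q_last, zero_add] using le_add_sum_of_castSucc_le_succ_add q _ q_step

end Filtration

instance finite_alternatingMap {R M N ι : Type*} [CommRing R] [IsNoetherianRing R]
    [AddCommGroup M] [Module R M] [Module.Finite R M] [Module.Free R M]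
    [AddCommGroup N] [Module R N] [Module.Finite R N] [Module.Free R N] [Finite ι] :
    Module.Finite R (M [⋀^ι]→ₗ[R] N) :=
  Module.Finite.of_injective (AlternatingMap.toMultilinearMapLM (S := R))
    AlternatingMap.coe_multilinearMap_injective

section Tableau

variable {E F : Type*} [AddCommGroup E] [Module ℝ E] [AddCommGroup F] [Module ℝ F]

theorem vanishingOn_top (m : ℕ) :
    vanishingOn m (⊤ : Submodule ℝ E) = (⊥ : Submodule ℝ (E [⋀^Fin m]→ₗ[ℝ] F)) :=
  eq_bot_iff.2 fun _ hc => AlternatingMap.ext fun u => hc u fun _ => Submodule.mem_top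

theorem prolongation_inf_compatibleMaps_bot_le {k : ℕ}
    (T : Submodule ℝ (E [⋀^Fin (k + 1)]→ₗ[ℝ] F)) (U : Submodule ℝ E) :
    prolongation T ⊓ U.compatibleMaps ⊥ ≤
      Submodule.compatibleMaps ⊤ (T ⊓ vanishingOn (k + 1) U) := by
  rintro ξ ⟨⟨map_mem, spencer_eq_zero⟩, vanishes⟩ w -
  refine ⟨map_mem w, fun u hu => ?_⟩
  have map_u_eq_zero (i : Fin (k + 1)) : ξ (u i) = 0 := vanishes (hu i)
  have cons_comp_succ : (Fin.cons w u : Fin (k + 2) → E) ∘ Fin.succ = u := Fin.cons_comp_succ w u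
  simpa [Fin.sum_univ_succ, map_u_eq_zero, cons_comp_succ] using spencer_eq_zero (Fin.cons w u)

theorem cartan_bound_general [FiniteDimensional ℝ E] {k n : ℕ}
    (T : Submodule ℝ (E [⋀^Fin (k + 1)]→ₗ[ℝ] F)) [FiniteDimensional ℝ T]
    (Wf : Fin (n + 1) → Submodule ℝ E)
    (hmono : Monotone Wf) (hbot : Wf 0 = ⊥) (htop : Wf (Fin.last n) = ⊤) :
    finrank ℝ (prolongation T) ≤
      ∑ i : Fin n, finrank ℝ (Wf i.succ) *
        (finrank ℝ ↥(T ⊓ vanishingOn (k + 1) (Wf i.castSucc)) -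
         finrank ℝ ↥(T ⊓ vanishingOn (k + 1) (Wf i.succ))) :=
  finrank_le_sum_finrank_mul_finrank_sub (prolongation T) Wf
    (fun i => T ⊓ vanishingOn (k + 1) (Wf i)) hmono hbot htop
    (by rw [htop, vanishingOn_top, inf_bot_eq])
    fun i => prolongation_inf_compatibleMaps_bot_le T (Wf i)

end Tableau

/-- **Cartan's bound** for a tableau of `k`-derivations with trivial symbol:
for any full flag `0 = W₀ ⊂ W₁ ⊂ … ⊂ Wₙ = W` with Cartan characters
`sᵢ = dim T_{W_{i-1}} − dim T_{W_i}`, the first prolongation satisfies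
`dim T^{(1)} ≤ s₁ + 2·s₂ + … + n·sₙ`. -/
theorem cartan_bound {k n : ℕ}
    (T : Submodule ℝ (AlternatingMap ℝ W V (Fin (k + 1))))
    (Wf : Fin (n + 1) → Submodule ℝ W)
    (hmono : Monotone Wf) (hbot : Wf 0 = ⊥) (htop : Wf (Fin.last n) = ⊤)
    (hdim : ∀ i : Fin (n + 1), finrank ℝ (Wf i) = (i : ℕ)) :
    finrank ℝ ↥(prolongation T) ≤
      ∑ i : Fin n, ((i : ℕ) + 1) *
        (finrank ℝ ↥(T ⊓ vanishingOn (k + 1) (Wf i.castSucc)) -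
         finrank ℝ ↥(T ⊓ vanishingOn (k + 1) (Wf i.succ))) := by
  simpa only [hdim, Fin.val_succ] using cartan_bound_general T Wf hmono hbot htop
end

section
/- Key claim in the proof of the generalized Cartan bound: let T ⊆ Λ^{k+1}(W;V) be a tableau of k-derivations with trivial symbol and U ⊆ W a subspace. Suppose ξ ∈ Λ^l(W;T) (l ≥ 1) satisfies (i) ξ(w_1,…,w_l) = 0 whenever at least one argument w_j lies in U, and (ii) δξ = 0 in Λ^{k+l+1}(W;V). Then ξ takes values in T_U; that is, ξ(w_1,…,w_l)(u_0,…,u_k) = 0 for all w_1,…,w_l ∈ W whenever u_0,…,u_k ∈ U. -/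
open Module

variable {W : Type*} [AddCommGroup W] [Module ℝ W] [FiniteDimensional ℝ W]
variable {V : Type*} [AddCommGroup V] [Module ℝ V] [FiniteDimensional ℝ V]

/-- `δξ = 0` for an alternating `l`-linear map `ξ` on `W` with values in `Λ^{k+1}(W;V)`:
the Spencer differential `δξ ∈ Λ^{k+l+1}(W;V)` is the full alternation of
`(w₁,…,w_l,u₀,…,u_k) ↦ ξ(w₁,…,w_l)(u₀,…,u_k)`. -/
def SpencerZero {k l : ℕ}
    (ξ : AlternatingMap ℝ W (AlternatingMap ℝ W V (Fin (k + 1))) (Fin l)) : Prop :=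
  ∀ w : Fin (l + (k + 1)) → W,
    ∑ σ : Equiv.Perm (Fin (l + (k + 1))),
      ((Equiv.Perm.sign σ : ℤ) : ℝ) •
        ξ (fun j : Fin l => w (σ (Fin.castAdd (k + 1) j)))
          (fun j : Fin (k + 1) => w (σ (Fin.natAdd l j))) = 0

/-!
Evaluate `δξ` on the `w_j` together with the `u_i`. A permutation of these arguments that moves some
`u_i` into one of the outer slots of `ξ` contributes zero. Every other permutation preserves the two
blocks, and since `ξ` alternates in each block its contribution is exactly `ξ(w)(u)`. There are
`l! (k + 1)!` of these permutations, so `δξ = 0` forces `l! (k + 1)! ξ(w)(u) = 0`.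
-/

section SpencerDifferential

open Equiv.Perm
open scoped Nat

theorem exists_inl_eq_inr_of_notMem_range_sumCongrHom {ι κ : Type*} [Finite ι] [Finite κ]
    {σ : Equiv.Perm (ι ⊕ κ)} (hσ : σ ∉ (sumCongrHom ι κ).range) :
    ∃ j i, σ (Sum.inl j) = Sum.inr i := by
  contrapose! hσ
  refine mem_sumCongrHom_range_of_perm_mapsTo_inl ?_
  rintro _ ⟨j, rfl⟩
  cases hj : σ (Sum.inl j) with
  | inl j' => exact ⟨j', rfl⟩
  | inr i => exact absurd hj (hσ j i)

variable {R M N ι κ : Type*} [CommRing R] [AddCommMonoid M] [Module R M] [AddCommGroup N]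
  [Module R N] [Fintype ι] [Fintype κ] [DecidableEq ι] [DecidableEq κ]

/-- The Spencer differential `δξ` of an alternating map `ξ` with values in alternating maps, as the
unnormalized alternation of `v ↦ ξ (v ∘ inl) (v ∘ inr)`. The arguments are indexed by `ι ⊕ κ`, so
that the two blocks need no index arithmetic. -/
def spencerDifferential (ξ : M [⋀^ι]→ₗ[R] (M [⋀^κ]→ₗ[R] N)) : M [⋀^(ι ⊕ κ)]→ₗ[R] N :=
  MultilinearMap.alternatization (MultilinearMap.uncurrySum
    ((AlternatingMap.toMultilinearMapLM (S := R)).compMultilinearMap ξ.toMultilinearMap))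

theorem spencerDifferential_apply (ξ : M [⋀^ι]→ₗ[R] (M [⋀^κ]→ₗ[R] N)) (v : ι ⊕ κ → M) :
    spencerDifferential ξ v =
      ∑ σ : Equiv.Perm (ι ⊕ κ),
        sign σ • ξ (fun j => v (σ (Sum.inl j))) (fun i => v (σ (Sum.inr i))) :=
  MultilinearMap.alternatization_apply _ v

theorem sign_sumCongr_smul_map_perm_map_perm (ξ : M [⋀^ι]→ₗ[R] (M [⋀^κ]→ₗ[R] N))
    (w : ι → M) (u : κ → M) (α : Equiv.Perm ι) (β : Equiv.Perm κ) :
    sign (sumCongr α β) • ξ (w ∘ α) (u ∘ β) = ξ w u := by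
  rw [sign_sumCongr, ξ.map_perm, AlternatingMap.smul_apply, (ξ w).map_perm,
    smul_smul (sign α), smul_smul, Int.units_mul_self, one_smul]

theorem spencerDifferential_sumElim_of_eq_zero (ξ : M [⋀^ι]→ₗ[R] (M [⋀^κ]→ₗ[R] N)) {u : κ → M}
    (hξ : ∀ v : ι → M, (∃ j i, v j = u i) → ξ v = 0) (w : ι → M) :
    spencerDifferential ξ (Sum.elim w u) =
      ((Fintype.card ι)! * (Fintype.card κ)!) • ξ w u := by
  have off_blocks : ∀ σ ∉ Set.range (sumCongrHom ι κ),
      sign σ • ξ (fun j => Sum.elim w u (σ (Sum.inl j))) (fun i => Sum.elim w u (σ (Sum.inr i))) =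
        0 := by
    intro σ hσ
    obtain ⟨j, i, hji⟩ := exists_inl_eq_inr_of_notMem_range_sumCongrHom hσ
    rw [hξ _ ⟨j, i, by rw [hji, Sum.elim_inr]⟩, AlternatingMap.zero_apply, smul_zero]
  calc spencerDifferential ξ (Sum.elim w u)
      = ∑ _ : Equiv.Perm ι × Equiv.Perm κ, ξ w u := by
        rw [spencerDifferential_apply]
        exact (Fintype.sum_of_injective _ sumCongrHom_injective _ _ off_blocks fun αβ =>
          (sign_sumCongr_smul_map_perm_map_perm ξ w u αβ.1 αβ.2).symm).symm
    _ = ((Fintype.card ι)! * (Fintype.card κ)!) • ξ w u := by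
        rw [Finset.sum_const, Finset.card_univ, Fintype.card_prod, Fintype.card_perm,
          Fintype.card_perm]

theorem spencer_kernel_claim_general [IsAddTorsionFree N] (S : Set M)
    (ξ : M [⋀^ι]→ₗ[R] (M [⋀^κ]→ₗ[R] N))
    (hvan : ∀ w : ι → M, (∃ j, w j ∈ S) → ξ w = 0)
    (hδ : spencerDifferential ξ = 0) (w : ι → M) (u : κ → M) (hu : ∀ i, u i ∈ S) :
    ξ w u = 0 := by
  have hmul : ((Fintype.card ι)! * (Fintype.card κ)!) • ξ w u = 0 := by
    rw [← spencerDifferential_sumElim_of_eq_zero ξ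
      (fun v ⟨j, i, hji⟩ => hvan v ⟨j, hji ▸ hu i⟩), hδ, AlternatingMap.zero_apply]
  exact (smul_eq_zero.mp hmul).resolve_left (by positivity)

end SpencerDifferential

theorem SpencerZero.spencerDifferential_eq_zero {M N : Type*} [AddCommGroup M] [Module ℝ M]
    [AddCommGroup N] [Module ℝ N] {k l : ℕ} {ξ : M [⋀^Fin l]→ₗ[ℝ] (M [⋀^Fin (k + 1)]→ₗ[ℝ] N)}
    (hδ : SpencerZero ξ) :
    spencerDifferential ξ = 0 := by
  ext v
  rw [spencerDifferential_apply, AlternatingMap.zero_apply, ← hδ (v ∘ finSumFinEquiv.symm),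
    ← finSumFinEquiv.permCongr.sum_comp]
  refine Finset.sum_congr rfl fun σ _ => ?_
  simp [Equiv.permCongr_apply, Units.smul_def, Int.cast_smul_eq_zsmul]

/-- **Key claim in the proof of the generalized Cartan bound**: let `T ⊆ Λ^{k+1}(W;V)` be a
tableau of `k`-derivations with trivial symbol and `U ⊆ W` a subspace.  If `ξ ∈ Λ^l(W;T)`
(`l ≥ 1`) vanishes whenever at least one of its arguments lies in `U`, and `δξ = 0`, then
`ξ` takes values in `T_U`: `ξ(w₁,…,w_l)(u₀,…,u_k) = 0` whenever all `uᵢ ∈ U`. -/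
theorem spencer_kernel_claim {k : ℕ} (l : ℕ) (hl : 1 ≤ l)
    (T : Submodule ℝ (AlternatingMap ℝ W V (Fin (k + 1))))
    (U : Submodule ℝ W)
    (ξ : AlternatingMap ℝ W (AlternatingMap ℝ W V (Fin (k + 1))) (Fin l))
    (hT : ∀ w : Fin l → W, ξ w ∈ T)
    (hvan : ∀ w : Fin l → W, (∃ j, w j ∈ U) → ξ w = 0)
    (hδ : SpencerZero ξ) :
    ∀ (w : Fin l → W) (u : Fin (k + 1) → W), (∀ i, u i ∈ U) → ξ w u = 0 := by
  have : IsAddTorsionFree V := .of_isTorsionFree ℝ V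
  exact spencer_kernel_claim_general (U : Set W) ξ hvan hδ.spencerDifferential_eq_zero
end

section
/- Bound on the Cartan characters of the first prolongation: let T ⊆ Λ^{k+1}(W;V) be a tableau of k-derivations with trivial symbol, 0 = W_0 ⊂ … ⊂ W_n = W a full flag with Cartan characters s_i, and T^{(1)} = {ξ ∈ Hom(W,T) : δξ = 0} the first prolongation, regarded as a classical tableau in Hom(W,T) with (T^{(1)})_U = {ξ ∈ T^{(1)} : ξ|_U = 0} and characters s^{(1)}_i = dim (T^{(1)})_{W_{i-1}} − dim (T^{(1)})_{W_i}. Then for every i, s^{(1)}_i ≤ s_i + s_{i+1} + … + s_n. -/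
/-!
If `ξ ∈ T^{(1)}` vanishes on `U`, then evaluating `δξ = 0` on `(w, u₀, …, u_k)` with `uᵢ ∈ U`
leaves only the term `ξ(w)(u₀, …, u_k)`, so `ξ` takes values in `T_U`.  Apply this with
`U = W_{i-1}` and restrict `ξ` to a complement `C` of `W_{i-1}` in `W_i`: the restriction lies in
`Hom(C, T_{W_{i-1}})`, and it is zero exactly when `ξ` vanishes on `W_i`.  Hence
`s^{(1)}ᵢ ≤ dim C · dim T_{W_{i-1}}`.  Since `T_W = 0`, the sum `sᵢ + … + sₙ` telescopes to
`dim T_{W_{i-1}}`.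
-/

open Module

variable {W : Type*} [AddCommGroup W] [Module ℝ W] [FiniteDimensional ℝ W]
variable {V : Type*} [AddCommGroup V] [Module ℝ V] [FiniteDimensional ℝ V]

/-- Linear maps `W → N` vanishing on the subspace `U`. -/
def homVanishing (U : Submodule ℝ W) (N : Type*) [AddCommGroup N] [Module ℝ N] :
    Submodule ℝ (W →ₗ[ℝ] N) where
  carrier := {f | ∀ u ∈ U, f u = 0}
  zero_mem' := by intro u _; simp
  add_mem' := by intro a b ha hb u hu; simp [ha u hu, hb u hu]
  smul_mem' := by intro c f hf u hu; simp [hf u hu]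

theorem sum_Ici_castSucc_tsub_succ {n : ℕ} {f : Fin (n + 1) → ℕ} (hf : Antitone f) (i : Fin n) :
    ∑ j ∈ Finset.Ici i, (f j.castSucc - f j.succ) = f i.castSucc - f (Fin.last n) := by
  have hstep (j : Fin n) : f j.succ ≤ f j.castSucc := hf (Fin.castSucc_le_succ j)
  have hlast : f (Fin.last n) ≤ f i.castSucc := hf (Fin.le_last _)
  cases n with
  | zero => exact i.elim0
  | succ n =>
    have htele := Fin.sum_Icc_sub (Fin.le_last i) fun j => -(f j : ℤ)
    simp only [neg_sub_neg, ← Fin.top_eq_last, Finset.Icc_top] at htele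
    zify [hstep, hlast]
    exact htele

section LinearMaps

variable {K M N : Type*} [Field K] [AddCommGroup M] [Module K M] [AddCommGroup N] [Module K N]

theorem finiteDimensional_of_forall_apply_mem [FiniteDimensional K M]
    (P : Submodule K (M →ₗ[K] N)) (S : Submodule K N) [FiniteDimensional K S]
    (hPS : ∀ ξ ∈ P, ∀ x, ξ x ∈ S) : FiniteDimensional K P :=
  Submodule.finiteDimensional_of_le (S₂ := LinearMap.range (S.subtype.compRight K (M := M)))
    fun ξ hξ => ⟨ξ.codRestrict S (hPS ξ hξ), rfl⟩

theorem finrank_le_mul_add_finrank_inf_ker_domRestrict (P : Submodule K (M →ₗ[K] N))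
    [FiniteDimensional K P] (C : Submodule K M) [FiniteDimensional K C]
    (S : Submodule K N) [FiniteDimensional K S] (hPS : ∀ ξ ∈ P, ∀ x ∈ C, ξ x ∈ S) :
    finrank K P ≤ finrank K C * finrank K S +
      finrank K ↥(P ⊓ LinearMap.ker (LinearMap.domRestrict' (M₂ := N) C)) := by
  let ρ : P →ₗ[K] C →ₗ[K] N := LinearMap.domRestrict' C ∘ₗ P.subtype
  have hrange : finrank K (LinearMap.range ρ) ≤ finrank K C * finrank K S := by
    have hle : LinearMap.range ρ ≤ LinearMap.range (S.subtype.compRight K (M := C)) := by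
      rintro _ ⟨ξ, rfl⟩
      exact ⟨(ρ ξ).codRestrict S fun x => hPS ξ ξ.2 x x.2, rfl⟩
    calc finrank K (LinearMap.range ρ)
        ≤ finrank K (LinearMap.range (S.subtype.compRight K (M := C))) :=
          Submodule.finrank_mono hle
      _ ≤ finrank K (C →ₗ[K] S) := LinearMap.finrank_range_le _
      _ = finrank K C * finrank K S := finrank_linearMap K K C S
  have hker : finrank K (LinearMap.ker ρ) =
      finrank K ↥(P ⊓ LinearMap.ker (LinearMap.domRestrict' (M₂ := N) C)) := by
    rw [← Submodule.finrank_map_subtype_eq, LinearMap.ker_comp, Submodule.map_comap_subtype]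
  rw [← ρ.finrank_range_add_finrank_ker, hker]
  gcongr

instance finiteDimensional_alternatingMap {ι : Type*} [Finite ι] [FiniteDimensional K M]
    [FiniteDimensional K N] : FiniteDimensional K (AlternatingMap K M N ι) :=
  FiniteDimensional.of_injective (AlternatingMap.toMultilinearMapLM (S := K))
    AlternatingMap.coe_multilinearMap_injective

end LinearMaps

section Tableaux

omit [FiniteDimensional ℝ W] [FiniteDimensional ℝ V]

theorem vanishingOn_antitone (m : ℕ) : Antitone (vanishingOn (W := W) (V := V) m) :=
  fun _ _ hAB _ hc u hu => hc u fun i => hAB (hu i)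

theorem vanishingOn_top_s4 (m : ℕ) : vanishingOn (W := W) (V := V) m ⊤ = ⊥ :=
  (Submodule.eq_bot_iff _).2 fun _ hc => AlternatingMap.ext fun u => hc u fun _ => trivial

theorem homVanishing_eq_ker (U : Submodule ℝ W) (N : Type*) [AddCommGroup N] [Module ℝ N] :
    homVanishing U N = LinearMap.ker (LinearMap.domRestrict' (M₂ := N) U) := by
  ext ξ
  exact ⟨fun h => LinearMap.ext fun u => h u u.2, fun h u hu => LinearMap.congr_fun h ⟨u, hu⟩⟩

theorem homVanishing_sup (A B : Submodule ℝ W) (N : Type*) [AddCommGroup N] [Module ℝ N] :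
    homVanishing (A ⊔ B) N = homVanishing A N ⊓ homVanishing B N := by
  ext ξ
  exact sup_le_iff (c := LinearMap.ker ξ)

variable {k : ℕ}

theorem apply_mem_vanishingOn {T : Submodule ℝ (AlternatingMap ℝ W V (Fin (k + 1)))}
    {U : Submodule ℝ W} {ξ : W →ₗ[ℝ] AlternatingMap ℝ W V (Fin (k + 1))}
    (hξ : ξ ∈ prolongation T) (hξU : ξ ∈ homVanishing U _) (w : W) :
    ξ w ∈ vanishingOn (k + 1) U := by
  intro u hu
  have hδ := hξ.2 (Fin.cons w u)
  have htail (j : Fin (k + 1)) : ξ (u j) = 0 := hξU (u j) (hu j)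
  simpa [Fin.sum_univ_succ, htail, Function.comp_def] using hδ

theorem sum_Ici_character_eq_finrank (T : Submodule ℝ (AlternatingMap ℝ W V (Fin (k + 1))))
    [FiniteDimensional ℝ T] {n : ℕ} {F : Fin (n + 1) → Submodule ℝ W} (hF : Monotone F)
    (htop : F (Fin.last n) = ⊤) (i : Fin n) :
    ∑ j ∈ Finset.Ici i,
        (finrank ℝ ↥(T ⊓ vanishingOn (k + 1) (F j.castSucc)) -
         finrank ℝ ↥(T ⊓ vanishingOn (k + 1) (F j.succ))) =
      finrank ℝ ↥(T ⊓ vanishingOn (k + 1) (F i.castSucc)) := by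
  have hanti : Antitone fun j => finrank ℝ ↥(T ⊓ vanishingOn (k + 1) (F j)) := fun _ _ hij =>
    Submodule.finrank_mono (inf_le_inf_left T (vanishingOn_antitone (k + 1) (hF hij)))
  rw [sum_Ici_castSucc_tsub_succ hanti, htop, vanishingOn_top_s4, inf_bot_eq, finrank_bot, tsub_zero]

end Tableaux

section Prolongation

omit [FiniteDimensional ℝ V]

variable {k : ℕ} (T : Submodule ℝ (AlternatingMap ℝ W V (Fin (k + 1)))) [FiniteDimensional ℝ T]

instance finiteDimensional_prolongation : FiniteDimensional ℝ (prolongation T) :=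
  finiteDimensional_of_forall_apply_mem _ T fun _ hξ => hξ.1

theorem finrank_prolongation_inf_homVanishing_sub_le {A B : Submodule ℝ W} (hAB : A ≤ B) :
    finrank ℝ ↥(prolongation T ⊓ homVanishing A (AlternatingMap ℝ W V (Fin (k + 1)))) -
      finrank ℝ ↥(prolongation T ⊓ homVanishing B (AlternatingMap ℝ W V (Fin (k + 1)))) ≤
    (finrank ℝ B - finrank ℝ A) * finrank ℝ ↥(T ⊓ vanishingOn (k + 1) A) := by
  obtain ⟨C, hdisj, rfl⟩ := IsModularLattice.exists_disjoint_and_sup_eq hAB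
  have hC : finrank ℝ ↥(A ⊔ C) - finrank ℝ A = finrank ℝ C := by
    have := Submodule.finrank_sup_add_finrank_inf_eq A C
    rw [hdisj.eq_bot, finrank_bot] at this
    lia
  rw [homVanishing_sup, ← inf_assoc, homVanishing_eq_ker C, hC, tsub_le_iff_right]
  exact finrank_le_mul_add_finrank_inf_ker_domRestrict _ C _
    fun ξ hξ w _ => ⟨hξ.1.1 w, apply_mem_vanishingOn hξ.1 hξ.2 w⟩

theorem prolongation_characters_bound_general {n : ℕ} {F : Fin (n + 1) → Submodule ℝ W}
    (hF : Monotone F) (htop : F (Fin.last n) = ⊤) (i : Fin n) :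
    finrank ℝ ↥(prolongation T ⊓
        homVanishing (F i.castSucc) (AlternatingMap ℝ W V (Fin (k + 1)))) -
      finrank ℝ ↥(prolongation T ⊓
        homVanishing (F i.succ) (AlternatingMap ℝ W V (Fin (k + 1)))) ≤
    (finrank ℝ (F i.succ) - finrank ℝ (F i.castSucc)) *
      ∑ j ∈ Finset.Ici i,
        (finrank ℝ ↥(T ⊓ vanishingOn (k + 1) (F j.castSucc)) -
         finrank ℝ ↥(T ⊓ vanishingOn (k + 1) (F j.succ))) := by
  rw [sum_Ici_character_eq_finrank T hF htop i]
  exact finrank_prolongation_inf_homVanishing_sub_le T (hF (Fin.castSucc_le_succ i))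

end Prolongation

/-- **Bound on the Cartan characters of the first prolongation**: with
`(T^{(1)})_U = {ξ ∈ T^{(1)} : ξ|_U = 0}` and
`s^{(1)}ᵢ = dim (T^{(1)})_{W_{i-1}} − dim (T^{(1)})_{W_i}`, one has
`s^{(1)}ᵢ ≤ sᵢ + s_{i+1} + … + sₙ` for every `i`. -/
theorem prolongation_characters_bound {k n : ℕ}
    (T : Submodule ℝ (AlternatingMap ℝ W V (Fin (k + 1))))
    (Wf : Fin (n + 1) → Submodule ℝ W)
    (hmono : Monotone Wf) (hbot : Wf 0 = ⊥) (htop : Wf (Fin.last n) = ⊤)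
    (hdim : ∀ i : Fin (n + 1), finrank ℝ (Wf i) = (i : ℕ)) :
    ∀ i : Fin n,
      finrank ℝ ↥(prolongation T ⊓
          homVanishing (Wf i.castSucc) (AlternatingMap ℝ W V (Fin (k + 1)))) -
      finrank ℝ ↥(prolongation T ⊓
          homVanishing (Wf i.succ) (AlternatingMap ℝ W V (Fin (k + 1)))) ≤
      ∑ j ∈ Finset.Ici i,
        (finrank ℝ ↥(T ⊓ vanishingOn (k + 1) (Wf j.castSucc)) -
         finrank ℝ ↥(T ⊓ vanishingOn (k + 1) (Wf j.succ))) := by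
  simpa [hdim] using prolongation_characters_bound_general T hmono htop
end

section
/- Ranks of iterated prolongations via iterated tail sums: let n ≥ 1 and let s_1,…,s_n be natural numbers. Define s^{(0)}_i = s_i for 1 ≤ i ≤ n, and recursively s^{(m+1)}_i = Σ_{j=i}^{n} s^{(m)}_j. Then for every m ≥ 0, Σ_{i=1}^{n} i·s^{(m)}_i = Σ_{i=1}^{n} C(i+m, m+1)·s_i, where C(a,b) denotes the binomial coefficient. -/
/-!
Tail sums are adjoint to head sums: exchanging the order of summation over pairs `i ≤ j` moves a
tail sum off the sequence and turns it into a head sum of the weights. After `m` such moves the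
weights `i` have been summed `m` times from `1`; Pascal's rule, in the form
`multichoose (j + 1) (k + 1) = multichoose j (k + 1) + multichoose (j + 1) k`, identifies the result
as `multichoose i (m + 1) = C(i + m, m + 1)`.
-/

open Finset

section Duality

variable {ι R M : Type*} [Preorder ι] [LocallyFiniteOrder ι]

/-- The sequence of partial sums of `c` started at `a`; as an operator on weights, it is the adjoint
of `tailSum` for the pairing `∑ i ∈ Icc a b, c i • f i`. -/
def headSum [AddCommMonoid R] (a : ι) (c : ι → R) (j : ι) : R :=
  ∑ i ∈ Icc a j, c i

/-- The sequence of sums of `f` up to the fixed endpoint `b`. It sends the Cartan characters of a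
prolongation to those of the next one; both are functions on all of `ι`, so that it can be
iterated. -/
def tailSum [AddCommMonoid M] (b : ι) (f : ι → M) (i : ι) : M :=
  ∑ j ∈ Icc i b, f j

variable [Semiring R] [AddCommMonoid M] [Module R M]

theorem sum_smul_tailSum (a b : ι) (c : ι → R) (f : ι → M) :
    ∑ i ∈ Icc a b, c i • tailSum b f i = ∑ j ∈ Icc a b, headSum a c j • f j := by
  simp only [tailSum, headSum, smul_sum, sum_smul]
  refine sum_comm' fun i j ↦ ?_
  simp only [mem_Icc]
  exact ⟨fun ⟨⟨hai, _⟩, hij, hjb⟩ ↦ ⟨⟨hai, hij⟩, hai.trans hij, hjb⟩,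
    fun ⟨⟨hai, hij⟩, _, hjb⟩ ↦ ⟨⟨hai, hij.trans hjb⟩, hij, hjb⟩⟩

theorem sum_smul_iterate_tailSum (a b : ι) (c : ι → R) (f : ι → M) (m : ℕ) :
    ∑ i ∈ Icc a b, c i • (tailSum b)^[m] f i = ∑ i ∈ Icc a b, (headSum a)^[m] c i • f i := by
  induction m generalizing c with
  | zero => rfl
  | succ m ih =>
    calc ∑ i ∈ Icc a b, c i • (tailSum b)^[m + 1] f i
      _ = ∑ i ∈ Icc a b, c i • tailSum b ((tailSum b)^[m] f) i := by
        rw [Function.iterate_succ_apply']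
      _ = ∑ i ∈ Icc a b, headSum a c i • (tailSum b)^[m] f i := sum_smul_tailSum a b c _
      _ = ∑ i ∈ Icc a b, (headSum a)^[m + 1] c i • f i := ih (headSum a c)

end Duality

theorem headSum_one_multichoose (k : ℕ) :
    headSum 1 (Nat.multichoose · k) = (Nat.multichoose · (k + 1)) := by
  funext j
  induction j with
  | zero => simp [headSum]
  | succ j ih =>
    rw [headSum, sum_Icc_succ_top (Nat.le_add_left 1 j), ← headSum, ih,
      Nat.multichoose_succ_succ]

theorem iterate_headSum_one_multichoose (k m : ℕ) :
    (headSum 1)^[m] (Nat.multichoose · k) = (Nat.multichoose · (k + m)) := by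
  induction m with
  | zero => rfl
  | succ m ih => rw [Function.iterate_succ_apply', ih, headSum_one_multichoose, add_assoc]

theorem iterate_headSum_one_id (m i : ℕ) :
    (headSum 1)^[m] id i = (i + m).choose (m + 1) := by
  have id_eq_multichoose : id = (Nat.multichoose · 1) :=
    funext fun i ↦ (Nat.multichoose_one_right i).symm
  calc (headSum 1)^[m] id i
    _ = i.multichoose (1 + m) := by rw [id_eq_multichoose, iterate_headSum_one_multichoose]
    _ = (i + m).choose (m + 1) := by
      rw [Nat.multichoose_eq, add_comm 1 m, ← add_assoc, Nat.add_sub_cancel]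

theorem iterated_tail_sums_general {M : Type*} [AddCommMonoid M] (n : ℕ) (s : ℕ → M)
    (S : ℕ → ℕ → M) (hS0 : ∀ i, S 0 i = s i)
    (hSrec : ∀ m i, S (m + 1) i = ∑ j ∈ Icc i n, S m j) (m : ℕ) :
    ∑ i ∈ Icc 1 n, i • S m i = ∑ i ∈ Icc 1 n, (i + m).choose (m + 1) • s i := by
  have S_eq_iterate : ∀ m, S m = (tailSum n)^[m] s := by
    intro m
    induction m with
    | zero => exact funext hS0
    | succ m ih => rw [Function.iterate_succ_apply', ← ih]; exact funext (hSrec m)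
  calc ∑ i ∈ Icc 1 n, i • S m i
    _ = ∑ i ∈ Icc 1 n, id i • (tailSum n)^[m] s i := by rw [S_eq_iterate]; rfl
    _ = ∑ i ∈ Icc 1 n, (headSum 1)^[m] id i • s i := sum_smul_iterate_tailSum 1 n id s m
    _ = ∑ i ∈ Icc 1 n, (i + m).choose (m + 1) • s i := by simp only [iterate_headSum_one_id]

/-- Ranks of iterated prolongations via iterated tail sums: if `s^{(0)}_i = s_i` and
`s^{(m+1)}_i = ∑_{j=i}^{n} s^{(m)}_j`, then for every `m`,
`∑_{i=1}^{n} i·s^{(m)}_i = ∑_{i=1}^{n} C(i+m, m+1)·s_i`. -/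
theorem iterated_tail_sums (n : ℕ) (hn : 1 ≤ n) (s : ℕ → ℕ)
    (S : ℕ → ℕ → ℕ)
    (hS0 : ∀ i, S 0 i = s i)
    (hSrec : ∀ m i, S (m + 1) i = ∑ j ∈ Finset.Icc i n, S m j) :
    ∀ m, ∑ i ∈ Finset.Icc 1 n, i * S m i =
      ∑ i ∈ Finset.Icc 1 n, Nat.choose (i + m) (m + 1) * s i :=
  iterated_tail_sums_general n s S hS0 hSrec
end
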